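/- Define g_{1,4}(τ) = g_{(2/4,0)}(4τ)⁸ · g_{(1/4,0)}(4τ)⁻⁸ for τ ∈ ℍ. Then the ring O_{1,4}(ℚ) of weakly holomorphic modular functions for Γ₁(4) with rational Fourier coefficients equals ℚ[g_{1,4}, g_{1,4}⁻¹, (g_{1,4} − 16)⁻¹]; that is, g_{1,4}, its reciprocal, and (g_{1,4}−16)⁻¹ lie in O_{1,4}(ℚ), and every element of O_{1,4}(ℚ) is a polynomial in these three functions with rational coefficients. -/

import Mathlib

open Complex UpperHalfPlane Matrix MatrixGroups CongruenceSubgroup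
open scoped UpperHalfPlane Manifold Real

noncomputable section

/-- `N·τ` as a point of the upper half-plane (junk value `τ` if `N = 0`). -/
def hsmul (N : ℕ) (τ : UpperHalfPlane) : UpperHalfPlane :=
  if hN : 0 < N then
    ⟨(N : ℂ) * τ, by
      have h0 : (0 : ℝ) < (N : ℝ) := by exact_mod_cast hN
      simpa [Complex.mul_im] using mul_pos h0 τ.2⟩
  else τ

/-- The Siegel function `g_r(τ)` given by its infinite product expansion. -/
def siegel (r : ℚ × ℚ) (τ : ℍ) : ℂ :=
  -Complex.exp ((Real.pi : ℂ) * Complex.I * (((r.1 : ℂ) ^ 2 - (r.1 : ℂ) + 1 / 6) * τ)) *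
    Complex.exp ((Real.pi : ℂ) * Complex.I * (r.2 : ℂ) * ((r.1 : ℂ) - 1)) *
    (1 - Complex.exp (2 * (Real.pi : ℂ) * Complex.I * ((r.1 : ℂ) * τ + (r.2 : ℂ)))) *
    ∏' n : ℕ,
      ((1 - Complex.exp (2 * (Real.pi : ℂ) * Complex.I *
          (((n : ℂ) + 1 + (r.1 : ℂ)) * τ + (r.2 : ℂ)))) *
       (1 - Complex.exp (2 * (Real.pi : ℂ) * Complex.I *
          (((n : ℂ) + 1 - (r.1 : ℂ)) * τ - (r.2 : ℂ)))))

/-- The lattice point `ω = m·τ + n` attached to a pair `(m,n) ∈ ℤ²`. -/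
def lat (τ : ℍ) (p : ℤ × ℤ) : ℂ := (p.1 : ℂ) * τ + (p.2 : ℂ)

/-- `g₂(τ) = 60 ∑_{ω ∈ L_τ ∖ {0}} ω⁻⁴`. -/
def g2C (τ : ℍ) : ℂ := 60 * ∑' p : {p : ℤ × ℤ // p ≠ 0}, ((lat τ p.1) ^ 4)⁻¹

/-- `g₃(τ) = 140 ∑_{ω ∈ L_τ ∖ {0}} ω⁻⁶`. -/
def g3C (τ : ℍ) : ℂ := 140 * ∑' p : {p : ℤ × ℤ // p ≠ 0}, ((lat τ p.1) ^ 6)⁻¹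

/-- The discriminant `Δ(τ) = g₂(τ)³ - 27 g₃(τ)²`. -/
def discC (τ : ℍ) : ℂ := g2C τ ^ 3 - 27 * g3C τ ^ 2

/-- The Weierstrass `℘`-function relative to the lattice `L_τ = ℤτ + ℤ`. -/
def wpC (z : ℂ) (τ : ℍ) : ℂ :=
  (z ^ 2)⁻¹ + ∑' p : {p : ℤ × ℤ // p ≠ 0}, (((z - lat τ p.1) ^ 2)⁻¹ - ((lat τ p.1) ^ 2)⁻¹)

/-- The Fricke function `f_r(τ)`. -/
def fricke (r : ℚ × ℚ) (τ : ℍ) : ℂ :=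
  -(2 ^ 7 * 3 ^ 5) * (g2C τ * g3C τ / discC τ) * wpC ((r.1 : ℂ) * τ + (r.2 : ℂ)) τ

/-- The elliptic modular `j`-invariant. -/
def jinv (τ : ℍ) : ℂ := 1728 * g2C τ ^ 3 / discC τ

/-- The Dedekind eta function. -/
def etaC (τ : ℍ) : ℂ :=
  (Real.sqrt (2 * Real.pi) : ℂ) * Complex.exp (2 * (Real.pi : ℂ) * Complex.I / 16) *
    Complex.exp (2 * (Real.pi : ℂ) * Complex.I * τ / 24) *
    ∏' n : ℕ, (1 - Complex.exp (2 * (Real.pi : ℂ) * Complex.I * ((n : ℂ) + 1) * τ))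

/-- `r ∈ ℚ² ∖ ℤ²`. -/
def NonIntegral (r : ℚ × ℚ) : Prop := ¬ ∃ a b : ℤ, r = ((a : ℚ), (b : ℚ))

/-- `r ∈ (1/N)ℤ²`. -/
def InDen (N : ℕ) (r : ℚ × ℚ) : Prop := ∃ a b : ℤ, r = ((a : ℚ) / N, (b : ℚ) / N)

/-- Membership in `Γ^1(N)`: `a ≡ d ≡ 1` and `b ≡ 0 (mod N)`. -/
def GammaUpper (N : ℕ) (γ : SL(2, ℤ)) : Prop :=
  ((γ 0 0 : ℤ) : ZMod N) = 1 ∧ ((γ 1 1 : ℤ) : ZMod N) = 1 ∧ ((γ 0 1 : ℤ) : ZMod N) = 0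

/-- The transpose action `ᵗγ r = (a r₁ + c r₂, b r₁ + d r₂)` of `γ = [[a,b],[c,d]]`. -/
def tAct (γ : SL(2, ℤ)) (r : ℚ × ℚ) : ℚ × ℚ :=
  ((γ 0 0 : ℚ) * r.1 + (γ 1 0 : ℚ) * r.2, (γ 0 1 : ℚ) * r.1 + (γ 1 1 : ℚ) * r.2)

/-- The power `q^{n/d} = e^{2πi(n/d)τ}`. -/
def qpow (d : ℕ) (n : ℤ) (τ : ℍ) : ℂ :=
  Complex.exp (2 * (Real.pi : ℂ) * Complex.I * ((n : ℂ) / (d : ℂ)) * τ)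

/-- `h` is a weakly holomorphic modular function for `Γ₁(N)` with rational
Fourier coefficients: holomorphic on `ℍ`, `Γ₁(N)`-invariant, with a convergent
`q`-expansion at `i∞` having rational coefficients, and meromorphic at every cusp. -/
def IsWeaklyHolo1 (N : ℕ) (h : ℍ → ℂ) : Prop :=
  MDifferentiable 𝓘(ℂ) 𝓘(ℂ) h ∧
  (∀ γ ∈ Gamma1 N, ∀ τ : ℍ, h (γ • τ) = h τ) ∧
  (∃ n₀ : ℤ, ∃ c : ℕ → ℚ,
    ∀ τ : ℍ, HasSum (fun n : ℕ => (c n : ℂ) * qpow 1 (n₀ + n) τ) (h τ)) ∧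
  (∀ γ : SL(2, ℤ), ∃ n₀ : ℤ, ∃ c : ℕ → ℂ,
    ∀ τ : ℍ, HasSum (fun n : ℕ => c n * qpow N (n₀ + n) τ) (h (γ • τ)))

/-- `h` is a weakly holomorphic modular function for `Γ^1(N)` with rational
Fourier coefficients (the expansion at `i∞` being in powers of `q^{1/N}`). -/
def IsWeaklyHoloUp (N : ℕ) (h : ℍ → ℂ) : Prop :=
  MDifferentiable 𝓘(ℂ) 𝓘(ℂ) h ∧
  (∀ γ : SL(2, ℤ), GammaUpper N γ → ∀ τ : ℍ, h (γ • τ) = h τ) ∧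
  (∃ n₀ : ℤ, ∃ c : ℕ → ℚ,
    ∀ τ : ℍ, HasSum (fun n : ℕ => (c n : ℂ) * qpow N (n₀ + n) τ) (h τ)) ∧
  (∀ γ : SL(2, ℤ), ∃ n₀ : ℤ, ∃ c : ℕ → ℂ,
    ∀ τ : ℍ, HasSum (fun n : ℕ => c n * qpow N (n₀ + n) τ) (h (γ • τ)))

/-- The Weierstrass-unit generator
`f^1_{m,N} = (f_{(1/N,0)} - f_{(1/m,0)})/(f_{(2/m,0)} - f_{(1/m,0)})`. -/
def fUnit (m N : ℕ) (τ : ℍ) : ℂ :=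
  (fricke ((1 : ℚ) / N, 0) τ - fricke ((1 : ℚ) / m, 0) τ) /
    (fricke ((2 : ℚ) / m, 0) τ - fricke ((1 : ℚ) / m, 0) τ)

/-- `g_{1,4}(τ) = g_{(2/4,0)}(4τ)⁸ · g_{(1/4,0)}(4τ)⁻⁸`. -/
def gOne4 (τ : ℍ) : ℂ :=
  siegel ((2 : ℚ) / 4, 0) (hsmul 4 τ) ^ 8 * (siegel ((1 : ℚ) / 4, 0) (hsmul 4 τ) ^ 8)⁻¹

/-!
Put `u = η(τ)⁸ / η(4τ)⁸`. The product expansions of `g = g_{1,4}` and `u` give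
`g(τ - 1/2) = -u(τ)`, and the inversion formula for `η` shows that the Fricke involution sends `g`
to `16 g / u` and `u` to `256 / u`. As `Γ₀(4)` is generated by `-1`, the unit translation and its
conjugate by the Fricke involution, both functions are invariant under `Γ₀(4)`. At the three cusps
`∞`, `1/2`, `0` the function `g` has a simple pole, a zero and the value `16`, while `u` has a
simple pole, the value `-16` and a zero. Hence `g - u` is bounded at every cusp, so it is the
constant `16`.

Given `h ∈ O_{1,4}(ℚ)`, the product `h (g u)^M` with `M` large is bounded at the cusps `1/2` and
`0`. Subtracting a polynomial in `g` with rational coefficients removes its principal part and its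
constant term at `∞`; what remains is bounded at every cusp and vanishes at `∞`, so it is zero.
-/

local notation "𝕢" => Function.Periodic.qParam

/-! ### Rational power series on the unit disc -/

/-- `F` is the sum of the power series `p` on the open unit disc. -/
def HasDiscSeries (F : ℂ → ℂ) (p : PowerSeries ℂ) : Prop :=
  ∀ ⦃q : ℂ⦄, ‖q‖ < 1 → HasSum (fun n ↦ p.coeff n * q ^ n) (F q)

section DiscSeries

open Filter Topology

variable {F G : ℂ → ℂ} {p r : PowerSeries ℂ}

lemma hasDiscSeries_of_differentiableOn (hF : DifferentiableOn ℂ F (Metric.ball 0 1)) :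
    HasDiscSeries F (.mk fun n ↦ (n.factorial : ℂ)⁻¹ * iteratedDeriv n F 0) := fun q hq ↦ by
  simpa [mul_left_comm, mul_comm] using
    Complex.hasSum_taylorSeries_on_ball (c := 0) (z := q) hF (by simpa using hq)

namespace HasDiscSeries

lemma hasFPowerSeriesOnBall (hF : HasDiscSeries F p) :
    HasFPowerSeriesOnBall F (FormalMultilinearSeries.ofScalars ℂ fun n ↦ p.coeff n) 0 1 where
  r_le := ENNReal.le_of_forall_nnreal_lt fun r hr ↦ by
    refine FormalMultilinearSeries.le_radius_of_summable _ ?_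
    have hr1 : (r : ℝ) < 1 := by exact_mod_cast hr
    simpa using (hF (q := (r : ℂ)) (by simpa using hr1)).summable.norm
  r_pos := one_pos
  hasSum {y} hy := by
    rw [← ENNReal.ofReal_one, Metric.eball_ofReal, mem_ball_zero_iff] at hy
    simpa [FormalMultilinearSeries.ofScalars_apply_eq, mul_comm] using hF hy

lemma differentiableOn (hF : HasDiscSeries F p) : DifferentiableOn ℂ F (Metric.ball 0 1) := by
  simpa only [← ENNReal.ofReal_one, Metric.eball_ofReal] using
    hF.hasFPowerSeriesOnBall.differentiableOn

lemma unique (hF : HasDiscSeries F p) (hG : HasDiscSeries G r)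
    (h : ∀ ⦃q : ℂ⦄, ‖q‖ < 1 → F q = G q) : p = r := by
  have hG' : HasDiscSeries F r := fun q hq ↦ h hq ▸ hG hq
  have hseries := hF.hasFPowerSeriesOnBall.hasFPowerSeriesAt.eq_formalMultilinearSeries
    hG'.hasFPowerSeriesOnBall.hasFPowerSeriesAt
  ext n
  exact congrFun (FormalMultilinearSeries.ofScalars_series_injective ℂ ℂ hseries) n

lemma const (c : ℂ) : HasDiscSeries (fun _ ↦ c) (PowerSeries.C c) := fun q _ ↦ by
  convert hasSum_ite_eq (0 : ℕ) c using 2 with n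
  rw [PowerSeries.coeff_C]
  split_ifs with hn <;> simp [hn]

lemma id : HasDiscSeries (fun q ↦ q) PowerSeries.X := fun q _ ↦ by
  convert hasSum_ite_eq (1 : ℕ) q using 2 with n
  rw [PowerSeries.coeff_X]
  split_ifs with hn <;> simp [hn]

lemma add (hF : HasDiscSeries F p) (hG : HasDiscSeries G r) : HasDiscSeries (F + G) (p + r) :=
  fun q hq ↦ by simpa [add_mul] using (hF hq).add (hG hq)

lemma mul (hF : HasDiscSeries F p) (hG : HasDiscSeries G r) :
    HasDiscSeries (F * G) (p * r) := fun q hq ↦ by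
  have hFs := (hF hq).summable.norm
  have hGs := (hG hq).summable.norm
  have hsum := (summable_norm_sum_mul_antidiagonal_of_summable_norm hFs hGs).of_norm.hasSum
  rw [← tsum_mul_tsum_eq_tsum_sum_antidiagonal_of_summable_norm hFs hGs, (hF hq).tsum_eq,
    (hG hq).tsum_eq] at hsum
  refine hsum.congr_fun fun n ↦ ?_
  rw [PowerSeries.coeff_mul, Finset.sum_mul]
  refine Finset.sum_congr rfl fun x hx ↦ ?_
  rw [← Finset.HasAntidiagonal.mem_antidiagonal.mp hx, pow_add, mul_mul_mul_comm]

end HasDiscSeries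

/-- The `ℚ`-algebra of functions given on the open unit disc by a power series with rational
coefficients; their values off the disc are arbitrary. -/
def rationalDiscAlg : Subalgebra ℚ (ℂ → ℂ) where
  carrier := {F | ∃ p : PowerSeries ℚ, HasDiscSeries F (p.map (algebraMap ℚ ℂ))}
  mul_mem' := by
    rintro F G ⟨p, hp⟩ ⟨r, hr⟩
    exact ⟨p * r, by simpa only [map_mul] using hp.mul hr⟩
  add_mem' := by
    rintro F G ⟨p, hp⟩ ⟨r, hr⟩
    exact ⟨p + r, by simpa only [map_add] using hp.add hr⟩
  algebraMap_mem' c := ⟨PowerSeries.C c, by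
    rw [PowerSeries.map_C]
    exact .const (algebraMap ℚ ℂ c)⟩

lemma differentiableOn_of_mem_rationalDiscAlg (hF : F ∈ rationalDiscAlg) :
    DifferentiableOn ℂ F (Metric.ball 0 1) :=
  hF.choose_spec.differentiableOn

lemma id_mem_rationalDiscAlg : (fun q ↦ q) ∈ rationalDiscAlg :=
  ⟨PowerSeries.X, by simpa only [PowerSeries.map_X] using .id⟩

lemma inv_mem_rationalDiscAlg (hF : F ∈ rationalDiscAlg) (h0 : ∀ ⦃q : ℂ⦄, ‖q‖ < 1 → F q ≠ 0) :
    F⁻¹ ∈ rationalDiscAlg := by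
  obtain ⟨p, hp⟩ := hF
  have hinv := hasDiscSeries_of_differentiableOn
    (hp.differentiableOn.inv fun q hq ↦ h0 (by simpa using hq))
  have hmul := (hp.mul hinv).unique (.const 1) fun q hq ↦ mul_inv_cancel₀ (h0 hq)
  rw [map_one] at hmul
  have hp0 : p.constantCoeff ≠ 0 := fun h ↦ by
    have := congrArg PowerSeries.constantCoeff hmul
    rw [map_mul, ← PowerSeries.coeff_zero_eq_constantCoeff_apply, PowerSeries.coeff_map,
      PowerSeries.coeff_zero_eq_constantCoeff_apply, h, map_zero, zero_mul] at this
    simp at this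
  refine ⟨p⁻¹, ?_⟩
  have hmul' : p.map (algebraMap ℚ ℂ) * (p⁻¹).map (algebraMap ℚ ℂ) = 1 := by
    rw [← map_mul, PowerSeries.mul_inv_cancel _ hp0, map_one]
  rwa [left_inv_eq_right_inv ((mul_comm _ _).trans hmul') hmul]

lemma exists_eq_add_mul_of_mem_rationalDiscAlg (hF : F ∈ rationalDiscAlg) :
    ∃ a : ℚ, F 0 = a ∧ ∃ G ∈ rationalDiscAlg, ∀ q, F q = a + q * G q := by
  obtain ⟨p, hp⟩ := hF
  have hslope : DifferentiableOn ℂ (dslope F 0) (Metric.ball 0 1) :=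
    (Complex.differentiableOn_dslope (Metric.ball_mem_nhds 0 one_pos)).mpr hp.differentiableOn
  have hsplit (q : ℂ) : F q = F 0 + q * dslope F 0 q := by
    simpa [eq_sub_iff_add_eq', eq_comm] using sub_smul_dslope F 0 q
  have hser := hasDiscSeries_of_differentiableOn hslope
  have hcoeff := hp.unique ((HasDiscSeries.const (F 0)).add (HasDiscSeries.id.mul hser))
    fun q _ ↦ hsplit q
  have hzero : F 0 = (p.coeff 0 : ℚ) := by
    simpa using (congrArg (PowerSeries.coeff 0) hcoeff).symm
  refine ⟨p.coeff 0, hzero, dslope F 0, ⟨.mk fun n ↦ p.coeff (n + 1), ?_⟩, fun q ↦ hzero ▸ hsplit q⟩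
  convert hser using 1
  ext n
  simpa [PowerSeries.coeff_succ_X_mul, PowerSeries.coeff_C] using
    congrArg (PowerSeries.coeff (n + 1)) hcoeff

section IntegerLimits

variable {ι : Type*} {l : Filter ι} {P : ι → Polynomial ℤ}

lemma tendstoLocallyUniformlyOn_iterate_derivative {U : Set ℂ} (hU : IsOpen U)
    (h : TendstoLocallyUniformlyOn (fun i z ↦ Polynomial.aeval z (P i)) F l U) (n : ℕ) :
    TendstoLocallyUniformlyOn (fun i z ↦ Polynomial.aeval z (Polynomial.derivative^[n] (P i)))
      (iteratedDeriv n F) l U := by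
  induction n with
  | zero => simpa using h
  | succ n ih =>
    rw [iteratedDeriv_succ]
    refine (ih.deriv (.of_forall fun i ↦ ?_) hU).congr fun i z _ ↦ ?_
    · exact (Polynomial.differentiable_aeval _).differentiableOn
    · rw [Function.iterate_succ_apply']
      exact Polynomial.deriv_aeval _

lemma mem_rationalDiscAlg_of_tendsto [l.NeBot]
    (h : TendstoLocallyUniformlyOn (fun i z ↦ Polynomial.aeval z (P i)) F l (Metric.ball 0 1)) :
    F ∈ rationalDiscAlg := by
  have hint (n : ℕ) : ∃ k : ℤ, (k : ℂ) = iteratedDeriv n F 0 := by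
    refine Complex.isClosed_range_intCast.mem_of_tendsto
      ((tendstoLocallyUniformlyOn_iterate_derivative Metric.isOpen_ball h n).tendsto_at
        (Metric.mem_ball_self one_pos)) (.of_forall fun i ↦ ?_)
    exact ⟨(Polynomial.derivative^[n] (P i)).coeff 0, by simp [Polynomial.aeval_def]⟩
  choose k hk using hint
  refine ⟨.mk fun n ↦ (n.factorial : ℚ)⁻¹ * k n, ?_⟩
  convert hasDiscSeries_of_differentiableOn (h.differentiableOn (.of_forall fun i ↦
    (Polynomial.differentiable_aeval _).differentiableOn) Metric.isOpen_ball) using 1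
  ext n
  simp [hk]

end IntegerLimits

end DiscSeries

/-! ### Euler products -/

/-- Euler's product `(q; q)_∞` on the unit disc. -/
def eulerProd (q : ℂ) : ℂ := ∏' n : ℕ, (1 - q ^ (n + 1))

/-- The product `(q; q²)_∞` over the odd exponents. -/
def oddProd (q : ℂ) : ℂ := ∏' n : ℕ, (1 - q ^ (2 * n + 1))

section EulerProducts

variable {q : ℂ}

lemma norm_pow_lt_one (hq : ‖q‖ < 1) {k : ℕ} (hk : k ≠ 0) : ‖q ^ k‖ < 1 := by
  simpa only [norm_pow] using pow_lt_one₀ (norm_nonneg q) hq hk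

lemma multipliable_one_sub_pow_comp (hq : ‖q‖ < 1) {f : ℕ → ℕ} (hf : f.Injective) :
    Multipliable fun n ↦ 1 - q ^ f n := by
  have hsum : Summable fun n ↦ ‖-q ^ f n‖ := by
    simpa only [norm_neg, norm_pow, Function.comp_def] using
      (summable_geometric_of_lt_one (norm_nonneg q) hq).comp_injective hf
  simpa only [sub_eq_add_neg] using multipliable_one_add_of_summable hsum

lemma multipliable_one_sub_pow_linear (hq : ‖q‖ < 1) {a : ℕ} (ha : a ≠ 0) (b : ℕ) :
    Multipliable fun n : ℕ ↦ 1 - q ^ (a * n + b) :=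
  multipliable_one_sub_pow_comp hq (f := fun n ↦ a * n + b) fun m n h ↦ by simpa [ha] using h

lemma tprod_one_sub_pow_even_mul_odd (hq : ‖q‖ < 1) {a : ℕ} (ha : a ≠ 0) (b : ℕ) :
    (∏' n : ℕ, (1 - q ^ (2 * a * n + b))) * ∏' n : ℕ, (1 - q ^ (2 * a * n + (a + b))) =
      ∏' n : ℕ, (1 - q ^ (a * n + b)) := by
  have heven (n : ℕ) : a * (2 * n) + b = 2 * a * n + b := by ring
  have hodd (n : ℕ) : a * (2 * n + 1) + b = 2 * a * n + (a + b) := by ring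
  have ha2 : 2 * a ≠ 0 := by simpa using ha
  simpa only [heven, hodd] using tprod_even_mul_odd (f := fun n ↦ 1 - q ^ (a * n + b))
    (by simpa only [heven] using multipliable_one_sub_pow_linear hq ha2 b)
    (by simpa only [hodd] using multipliable_one_sub_pow_linear hq ha2 (a + b))

lemma eulerProd_zero : eulerProd 0 = 1 := by simp [eulerProd]

lemma eulerProd_ne_zero (hq : ‖q‖ < 1) : eulerProd q ≠ 0 := by
  simp_rw [eulerProd, sub_eq_add_neg]
  refine tprod_one_add_ne_zero_of_summable (f := fun n ↦ -q ^ (n + 1)) (fun n h ↦ ?_) ?_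
  · have hlt := norm_pow_lt_one hq n.succ_ne_zero
    rw [show q ^ (n + 1) = 1 by linear_combination -h, norm_one] at hlt
    exact lt_irrefl _ hlt
  · simpa using (summable_nat_add_iff 1).mpr (summable_geometric_of_lt_one (norm_nonneg q) hq)

lemma eulerProd_eq_oddProd_mul (hq : ‖q‖ < 1) : eulerProd q = oddProd q * eulerProd (q ^ 2) := by
  have h := tprod_one_sub_pow_even_mul_odd hq one_ne_zero 1
  simp only [mul_one, one_mul] at h
  simp only [eulerProd, oddProd, ← h, ← pow_mul, mul_add, mul_one, one_add_one_eq_two]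

lemma oddProd_ne_zero (hq : ‖q‖ < 1) : oddProd q ≠ 0 :=
  left_ne_zero_of_mul (eulerProd_eq_oddProd_mul hq ▸ eulerProd_ne_zero hq)

lemma oddProd_mul_oddProd_neg (hq : ‖q‖ < 1) : oddProd q * oddProd (-q) = oddProd (q ^ 2) := by
  have hmul {r : ℂ} (hr : ‖r‖ < 1) := multipliable_one_sub_pow_linear hr two_ne_zero 1
  rw [oddProd, oddProd, ← (hmul hq).tprod_mul (hmul (by simpa using hq))]
  refine tprod_congr fun n ↦ ?_
  rw [Odd.neg_pow ⟨n, rfl⟩]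
  ring

end EulerProducts

/-! ### The generator as an eta quotient -/

/-- `q · g_{1,4}` as a function of `q = e^{2πiτ}`. -/
def gReg (q : ℂ) : ℂ := eulerProd (q ^ 2) ^ 24 / (eulerProd q ^ 8 * eulerProd (q ^ 4) ^ 16)

/-- `q · uOne4` as a function of `q = e^{2πiτ}`. -/
def uReg (q : ℂ) : ℂ := eulerProd q ^ 8 / eulerProd (q ^ 4) ^ 8

/-- The eta quotient `η(τ)⁸ / η(4τ)⁸`, which will turn out to be `g_{1,4} - 16`. -/
def uOne4 (τ : ℍ) : ℂ := ModularForm.eta τ ^ 8 / ModularForm.eta (4 * τ) ^ 8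

section RegularParts

variable {q : ℂ}

lemma eulerProd_sq_eq (hq : ‖q‖ < 1) : eulerProd (q ^ 2) = oddProd (q ^ 2) * eulerProd (q ^ 4) := by
  rw [eulerProd_eq_oddProd_mul (norm_pow_lt_one hq two_ne_zero), ← pow_mul]

lemma gReg_eq_oddProd (hq : ‖q‖ < 1) : gReg q = oddProd (q ^ 2) ^ 16 / oddProd q ^ 8 := by
  have := eulerProd_ne_zero (norm_pow_lt_one hq four_ne_zero)
  have := oddProd_ne_zero hq
  have := oddProd_ne_zero (norm_pow_lt_one hq two_ne_zero)
  rw [gReg, eulerProd_eq_oddProd_mul hq, eulerProd_sq_eq hq]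
  field_simp

lemma uReg_eq_oddProd (hq : ‖q‖ < 1) : uReg q = (oddProd q * oddProd (q ^ 2)) ^ 8 := by
  have := eulerProd_ne_zero (norm_pow_lt_one hq four_ne_zero)
  rw [uReg, eulerProd_eq_oddProd_mul hq, eulerProd_sq_eq hq]
  field_simp

lemma gReg_neg (hq : ‖q‖ < 1) : gReg (-q) = uReg q := by
  have := oddProd_ne_zero hq
  have := oddProd_ne_zero (q := -q) (by simpa using hq)
  rw [gReg_eq_oddProd (by simpa using hq), uReg_eq_oddProd hq, neg_sq,
    ← oddProd_mul_oddProd_neg hq]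
  field_simp

lemma uReg_neg (hq : ‖q‖ < 1) : uReg (-q) = gReg q := by
  rw [← gReg_neg (by simpa using hq), neg_neg]

lemma gReg_zero : gReg 0 = 1 := by simp [gReg, eulerProd_zero]

lemma uReg_zero : uReg 0 = 1 := by simp [uReg, eulerProd_zero]

lemma gReg_ne_zero (hq : ‖q‖ < 1) : gReg q ≠ 0 := by
  rw [gReg_eq_oddProd hq]
  exact div_ne_zero (pow_ne_zero _ (oddProd_ne_zero (norm_pow_lt_one hq two_ne_zero)))
    (pow_ne_zero _ (oddProd_ne_zero hq))

lemma uReg_ne_zero (hq : ‖q‖ < 1) : uReg q ≠ 0 :=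
  gReg_neg hq ▸ gReg_ne_zero (by simpa using hq)

end RegularParts

section Siegel

variable {N k : ℕ}

lemma coe_hsmul (hN : 0 < N) (τ : ℍ) : ((hsmul N τ : ℍ) : ℂ) = N * τ := by
  simp [hsmul, hN]

lemma norm_qParam_coe_lt_one {h : ℝ} (hh : 0 < h) (τ : ℍ) : ‖𝕢 h τ‖ < 1 :=
  Function.Periodic.norm_qParam_lt_one hh τ.im_pos

lemma cexp_two_pi_I_eq_qParam_pow {m : ℕ} {w z : ℂ} (hw : w = m * z) :
    cexp (2 * π * Complex.I * w) = 𝕢 1 z ^ m := by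
  rw [hw, Function.Periodic.qParam, ← Complex.exp_nat_mul]
  push_cast
  ring_nf

lemma siegel_div_zero_hsmul (hk : 0 < k) (hkN : k < N) (τ : ℍ) :
    siegel ((k : ℚ) / N, 0) (hsmul N τ) =
      -cexp (π * Complex.I * (((k / N : ℂ) ^ 2 - k / N + 1 / 6) * (N * τ))) *
        ((∏' n : ℕ, (1 - 𝕢 1 τ ^ (N * n + k))) * ∏' n : ℕ, (1 - 𝕢 1 τ ^ (N * n + (N - k)))) := by
  have hN : (N : ℂ) ≠ 0 := by exact_mod_cast (hk.trans hkN).ne'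
  have hmul := multipliable_one_sub_pow_linear (norm_qParam_coe_lt_one one_pos τ) (hk.trans hkN).ne'
  have hsucc : Multipliable fun n : ℕ ↦ 1 - 𝕢 1 τ ^ (N * (n + 1) + k) := by
    simpa only [mul_add, mul_one, add_assoc] using hmul (N + k)
  have hshift : ∏' n : ℕ, (1 - 𝕢 1 τ ^ (N * n + k)) =
      (1 - 𝕢 1 τ ^ k) * ∏' n : ℕ, (1 - 𝕢 1 τ ^ (N * (n + 1) + k)) := by
    rw [tprod_eq_zero_mul' (f := fun n ↦ 1 - 𝕢 1 τ ^ (N * n + k)) hsucc, mul_zero, zero_add]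
  have hfirst : (k / N : ℂ) * (N * τ) = k * τ := by
    field_simp
  have hplus (n : ℕ) : (n + 1 + k / N : ℂ) * (N * τ) = (N * (n + 1) + k : ℕ) * τ := by
    push_cast; field_simp
  have hminus (n : ℕ) : (n + 1 - k / N : ℂ) * (N * τ) = (N * n + (N - k) : ℕ) * τ := by
    push_cast [hkN.le]; field_simp; ring
  simp only [siegel, coe_hsmul (hk.trans hkN), Rat.cast_div, Rat.cast_natCast, Rat.cast_zero,
    add_zero, sub_zero, mul_zero, zero_mul, Complex.exp_zero, mul_one,
    cexp_two_pi_I_eq_qParam_pow hfirst, fun n ↦ cexp_two_pi_I_eq_qParam_pow (hplus n),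
    fun n ↦ cexp_two_pi_I_eq_qParam_pow (hminus n)]
  rw [hsucc.tprod_mul (hmul _), hshift]
  simp only [mul_assoc]

lemma siegel_one_quarter_hsmul (τ : ℍ) :
    siegel (1 / 4, 0) (hsmul 4 τ) =
      -cexp (π * Complex.I * (-1 / 12 * τ)) * oddProd (𝕢 1 τ) := by
  have h := siegel_div_zero_hsmul one_pos (show 1 < 4 by norm_num) τ
  have hsplit := tprod_one_sub_pow_even_mul_odd (norm_qParam_coe_lt_one one_pos τ) two_ne_zero 1
  norm_num at h hsplit
  rw [h, hsplit, oddProd]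
  ring_nf

lemma siegel_two_quarters_hsmul (τ : ℍ) :
    siegel (2 / 4, 0) (hsmul 4 τ) =
      -cexp (π * Complex.I * (-1 / 3 * τ)) * oddProd (𝕢 1 τ ^ 2) ^ 2 := by
  have h := siegel_div_zero_hsmul two_pos (show 2 < 4 by norm_num) τ
  have hexp (n : ℕ) : 4 * n + 2 = 2 * (2 * n + 1) := by ring
  norm_num [hexp] at h
  norm_num
  rw [h, oddProd]
  simp only [← pow_mul]
  ring_nf

lemma gOne4_eq_inv_mul_gReg (τ : ℍ) : gOne4 τ = (𝕢 1 τ)⁻¹ * gReg (𝕢 1 τ) := by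
  have hq := norm_qParam_coe_lt_one one_pos τ
  have := oddProd_ne_zero hq
  have hexp : cexp (π * Complex.I * (-1 / 3 * τ)) ^ 8 =
      (𝕢 1 τ)⁻¹ * cexp (π * Complex.I * (-1 / 12 * τ)) ^ 8 := by
    rw [Function.Periodic.qParam, ← Complex.exp_neg, ← Complex.exp_nat_mul, ← Complex.exp_nat_mul,
      ← Complex.exp_add]
    push_cast
    ring_nf
  rw [gOne4, siegel_one_quarter_hsmul, siegel_two_quarters_hsmul, gReg_eq_oddProd hq, mul_pow,
    mul_pow, neg_pow, neg_pow (cexp _), hexp]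
  field_simp

end Siegel

section EtaQuotients

lemma qParam_natCast_mul (h : ℝ) (n : ℕ) (z : ℂ) : 𝕢 h (n * z) = 𝕢 h z ^ n := by
  rw [Function.Periodic.qParam, Function.Periodic.qParam, ← Complex.exp_nat_mul]
  ring_nf

lemma qParam_natCast_mul_pow (h : ℝ) {n : ℕ} (hn : n ≠ 0) (z : ℂ) : 𝕢 (n * h) z ^ n = 𝕢 h z := by
  have : (n : ℂ) ≠ 0 := by exact_mod_cast hn
  rw [Function.Periodic.qParam, Function.Periodic.qParam, ← Complex.exp_nat_mul]
  push_cast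
  congr 1
  field_simp

lemma eta_pow_eight (z : ℂ) : ModularForm.eta z ^ 8 = 𝕢 3 z * eulerProd (𝕢 1 z) ^ 8 := by
  have h := qParam_natCast_mul_pow 3 (n := 8) (by norm_num) z
  norm_num at h
  rw [ModularForm.eta, mul_pow, h, eulerProd]

lemma eta_mul_pow_eight {n : ℕ} (τ : ℍ) :
    ModularForm.eta (n * τ) ^ 8 = 𝕢 3 τ ^ n * eulerProd (𝕢 1 τ ^ n) ^ 8 := by
  rw [eta_pow_eight, qParam_natCast_mul, qParam_natCast_mul]

lemma qParam_one_eq_qParam_three_pow (z : ℂ) : 𝕢 1 z = 𝕢 3 z ^ 3 := by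
  simpa using (qParam_natCast_mul_pow 1 three_ne_zero z).symm

lemma uOne4_eq_inv_mul_uReg (τ : ℍ) : uOne4 τ = (𝕢 1 τ)⁻¹ * uReg (𝕢 1 τ) := by
  have h4 := eta_mul_pow_eight (n := 4) τ
  have h3 := qParam_one_eq_qParam_three_pow τ
  have := Function.Periodic.qParam_ne_zero (h := 3) (τ : ℂ)
  push_cast at h4
  rw [uOne4, eta_pow_eight, h4, uReg]
  generalize eulerProd (𝕢 1 τ) = x, eulerProd (𝕢 1 τ ^ 4) = y
  rw [h3]
  field_simp

lemma gOne4_eq_eta (τ : ℍ) :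
    gOne4 τ = ModularForm.eta (2 * τ) ^ 24 /
      (ModularForm.eta τ ^ 8 * ModularForm.eta (4 * τ) ^ 16) := by
  have h2 := eta_mul_pow_eight (n := 2) τ
  have h4 := eta_mul_pow_eight (n := 4) τ
  have h3 := qParam_one_eq_qParam_three_pow τ
  have := Function.Periodic.qParam_ne_zero (h := 3) (τ : ℂ)
  push_cast at h2 h4
  rw [gOne4_eq_inv_mul_gReg, gReg, pow_mul (ModularForm.eta _) 8 3,
    pow_mul (ModularForm.eta _) 8 2, h2, h4, eta_pow_eight]
  generalize eulerProd (𝕢 1 τ) = x, eulerProd (𝕢 1 τ ^ 2) = y, eulerProd (𝕢 1 τ ^ 4) = z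
  rw [h3]
  field_simp

end EtaQuotients

lemma eulerProd_pow_mem_rationalDiscAlg {k : ℕ} (hk : k ≠ 0) :
    (fun q ↦ eulerProd (q ^ k)) ∈ rationalDiscAlg := by
  have hprod := ModularForm.multipliableLocallyUniformlyOn_one_sub_pow.hasProdLocallyUniformlyOn
  rw [HasProdLocallyUniformlyOn] at hprod
  have hmaps : Set.MapsTo (fun q : ℂ ↦ q ^ k) (Metric.ball 0 1) (Metric.ball 0 1) := fun q hq ↦ by
    simpa only [mem_ball_zero_iff] using norm_pow_lt_one (q := q) (by simpa using hq) hk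
  refine mem_rationalDiscAlg_of_tendsto (l := Filter.atTop)
    (P := fun s : Finset ℕ ↦ ∏ n ∈ s, (1 - (Polynomial.X ^ k) ^ (n + 1))) ?_
  refine (hprod.comp _ hmaps (by fun_prop)).congr fun s q _ ↦ by simp

lemma gReg_mem_rationalDiscAlg : gReg ∈ rationalDiscAlg := by
  have hpow {k : ℕ} (hk : k ≠ 0) := eulerProd_pow_mem_rationalDiscAlg hk
  have hden := mul_mem (pow_mem (hpow one_ne_zero) 8) (pow_mem (hpow four_ne_zero) 16)
  convert mul_mem (pow_mem (hpow two_ne_zero) 24)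
    (inv_mem_rationalDiscAlg hden fun q hq ↦ ?_) using 1
  · ext q
    simp [gReg, div_eq_mul_inv]
  · exact mul_ne_zero (pow_ne_zero _ (eulerProd_ne_zero (norm_pow_lt_one hq one_ne_zero)))
      (pow_ne_zero _ (eulerProd_ne_zero (norm_pow_lt_one hq four_ne_zero)))

lemma uReg_mem_rationalDiscAlg : uReg ∈ rationalDiscAlg := by
  have hpow {k : ℕ} (hk : k ≠ 0) := eulerProd_pow_mem_rationalDiscAlg hk
  convert mul_mem (pow_mem (hpow one_ne_zero) 8)
    (inv_mem_rationalDiscAlg (pow_mem (hpow four_ne_zero) 8) fun q hq ↦ ?_) using 1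
  · ext q
    simp [uReg, div_eq_mul_inv]
  · exact pow_ne_zero _ (eulerProd_ne_zero (norm_pow_lt_one hq four_ne_zero))

/-! ### Transformation laws -/

/-- The Fricke involution `τ ↦ -1 / (4τ)` of level four. -/
def frickeInvol (τ : ℍ) : ℍ := ModularGroup.S • hsmul 4 τ

/-- The lower unipotent matrix `[[1, 0], [n, 1]]`. -/
def lowerUnip (n : ℤ) : SL(2, ℤ) := ⟨!![1, 0; n, 1], by simp [Matrix.det_fin_two_of]⟩

section FrickeInvolution

lemma coe_frickeInvol (τ : ℍ) : (frickeInvol τ : ℂ) = -1 / (4 * τ) := by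
  rw [frickeInvol, modular_S_smul, coe_mk, coe_hsmul four_pos]
  push_cast
  field_simp [τ.ne_zero]

lemma frickeInvol_frickeInvol (τ : ℍ) : frickeInvol (frickeInvol τ) = τ := by
  ext
  rw [coe_frickeInvol, coe_frickeInvol]
  field_simp [τ.ne_zero]

lemma coe_lowerUnip_smul (n : ℤ) (τ : ℍ) : ((lowerUnip n • τ : ℍ) : ℂ) = τ / (n * τ + 1) := by
  rw [coe_specialLinearGroup_apply]
  simp [lowerUnip]

lemma lowerUnip_smul_eq (n : ℤ) (τ : ℍ) :
    lowerUnip n • τ = frickeInvol ((-(n / 4) : ℝ) +ᵥ frickeInvol τ) := by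
  ext
  have : (n * τ + 1 : ℂ) ≠ 0 := by
    simpa using linear_ne_zero (cd := ![(n : ℝ), 1]) τ fun h ↦ by simpa using congrFun h 1
  have hτ := τ.ne_zero
  rw [coe_lowerUnip_smul, coe_frickeInvol, coe_vadd, coe_frickeInvol]
  push_cast
  have hinner : 4 * (-(n / 4) + -1 / (4 * τ) : ℂ) = -(n * τ + 1) / τ := by
    field_simp
    ring
  rw [hinner]
  field_simp

lemma eta_neg_one_div_pow_eight (τ : ℍ) :
    ModularForm.eta (-1 / τ) ^ 8 = τ ^ 4 * ModularForm.eta τ ^ 8 := by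
  have hsqrt {z : ℂ} : Complex.sqrt z ^ 8 = z ^ 4 := by
    rw [Complex.sqrt, ← Complex.cpow_nat_mul,
      show ((8 : ℕ) : ℂ) * 2⁻¹ = (4 : ℕ) by norm_num, Complex.cpow_natCast]
  have h := ModularForm.eta_comp_eq_csqrt_I_inv τ.2
  simp only [Function.comp_apply, Pi.smul_apply, Pi.mul_apply, smul_eq_mul] at h
  rw [h, mul_pow, mul_pow, inv_pow, hsqrt, hsqrt, Complex.I_pow_four, inv_one, one_mul]

lemma eta_neg_one_div_mul_pow_eight {n : ℕ} (hn : 0 < n) (τ : ℍ) :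
    ModularForm.eta (-1 / (n * τ)) ^ 8 = (n * τ) ^ 4 * ModularForm.eta (n * τ) ^ 8 := by
  simpa only [coe_hsmul hn] using eta_neg_one_div_pow_eight (hsmul n τ)

lemma eta_frickeInvol_pow_eight (τ : ℍ) :
    ModularForm.eta (frickeInvol τ) ^ 8 = 256 * τ ^ 4 * ModularForm.eta (4 * τ) ^ 8 ∧
    ModularForm.eta (2 * frickeInvol τ) ^ 8 = 16 * τ ^ 4 * ModularForm.eta (2 * τ) ^ 8 ∧
    ModularForm.eta (4 * frickeInvol τ) ^ 8 = τ ^ 4 * ModularForm.eta τ ^ 8 := by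
  have hτ := τ.ne_zero
  have h2 : (2 * frickeInvol τ : ℂ) = -1 / (2 * τ) := by
    rw [coe_frickeInvol]; field_simp; norm_num
  have h4 : (4 * frickeInvol τ : ℂ) = -1 / τ := by
    rw [coe_frickeInvol]; field_simp
  have eta2 := eta_neg_one_div_mul_pow_eight two_pos τ
  have eta4 := eta_neg_one_div_mul_pow_eight four_pos τ
  push_cast at eta2 eta4
  rw [coe_frickeInvol, ← coe_frickeInvol, h2, h4, coe_frickeInvol, eta2, eta4,
    eta_neg_one_div_pow_eight]
  refine ⟨by ring, by ring, rfl⟩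

lemma eta_ne_zero (τ : ℍ) : ModularForm.eta τ ≠ 0 := ModularForm.eta_ne_zero τ.2

lemma eta_mul_ne_zero {n : ℕ} (hn : 0 < n) (τ : ℍ) : ModularForm.eta (n * τ) ≠ 0 := by
  simpa only [coe_hsmul hn] using eta_ne_zero (hsmul n τ)

lemma gOne4_ne_zero (τ : ℍ) : gOne4 τ ≠ 0 := by
  rw [gOne4_eq_inv_mul_gReg]
  exact mul_ne_zero (inv_ne_zero (Function.Periodic.qParam_ne_zero _))
    (gReg_ne_zero (norm_qParam_coe_lt_one one_pos τ))

lemma uOne4_ne_zero (τ : ℍ) : uOne4 τ ≠ 0 := by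
  rw [uOne4_eq_inv_mul_uReg]
  exact mul_ne_zero (inv_ne_zero (Function.Periodic.qParam_ne_zero _))
    (uReg_ne_zero (norm_qParam_coe_lt_one one_pos τ))

lemma gOne4_frickeInvol (τ : ℍ) : gOne4 (frickeInvol τ) = 16 * gOne4 τ / uOne4 τ := by
  obtain ⟨h1, h2, h4⟩ := eta_frickeInvol_pow_eight τ
  have := τ.ne_zero
  have := eta_ne_zero τ
  have := eta_mul_ne_zero four_pos τ
  push_cast at this
  rw [gOne4_eq_eta, gOne4_eq_eta, uOne4, pow_mul (ModularForm.eta (2 * frickeInvol τ)) 8 3,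
    pow_mul (ModularForm.eta (4 * frickeInvol τ)) 8 2, h1, h2, h4]
  field_simp
  ring

lemma uOne4_frickeInvol (τ : ℍ) : uOne4 (frickeInvol τ) = 256 / uOne4 τ := by
  obtain ⟨h1, -, h4⟩ := eta_frickeInvol_pow_eight τ
  have := τ.ne_zero
  rw [uOne4, uOne4, h1, h4]
  field_simp

end FrickeInvolution

section Translations

lemma qParam_vadd (h t : ℝ) (τ : ℍ) :
    𝕢 h (t +ᵥ τ : ℍ) = cexp (2 * π * Complex.I * t / h) * 𝕢 h τ := by
  rw [Function.Periodic.qParam, Function.Periodic.qParam, ← Complex.exp_add, coe_vadd]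
  ring_nf

lemma qParam_one_neg_half_vadd (τ : ℍ) : 𝕢 1 ((-(1 / 2) : ℝ) +ᵥ τ : ℍ) = -𝕢 1 τ := by
  rw [qParam_vadd, show 2 * π * Complex.I * (-(1 / 2) : ℝ) / (1 : ℝ) = -(π * Complex.I) by
    push_cast; ring, Complex.exp_neg, Complex.exp_pi_mul_I]
  ring

lemma qParam_intCast_vadd {h : ℝ} (hh : h ≠ 0) (k : ℤ) (τ : ℍ) :
    𝕢 h ((k * h : ℝ) +ᵥ τ : ℍ) = 𝕢 h τ := by
  have : (h : ℂ) ≠ 0 := by exact_mod_cast hh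
  rw [qParam_vadd, show 2 * π * Complex.I * (k * h : ℝ) / h = k * (2 * π * Complex.I) by
    push_cast; field_simp, Complex.exp_int_mul_two_pi_mul_I, one_mul]

lemma gOne4_neg_half_vadd (τ : ℍ) : gOne4 ((-(1 / 2) : ℝ) +ᵥ τ) = -uOne4 τ := by
  rw [gOne4_eq_inv_mul_gReg, uOne4_eq_inv_mul_uReg, qParam_one_neg_half_vadd,
    gReg_neg (norm_qParam_coe_lt_one one_pos τ)]
  ring

lemma uOne4_neg_half_vadd (τ : ℍ) : uOne4 ((-(1 / 2) : ℝ) +ᵥ τ) = -gOne4 τ := by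
  rw [gOne4_eq_inv_mul_gReg, uOne4_eq_inv_mul_uReg, qParam_one_neg_half_vadd,
    uReg_neg (norm_qParam_coe_lt_one one_pos τ)]
  ring

lemma gOne4_intCast_vadd (k : ℤ) (τ : ℍ) : gOne4 ((k : ℝ) +ᵥ τ) = gOne4 τ := by
  have h := qParam_intCast_vadd one_ne_zero k τ
  rw [mul_one] at h
  rw [gOne4_eq_inv_mul_gReg, gOne4_eq_inv_mul_gReg, h]

lemma uOne4_intCast_vadd (k : ℤ) (τ : ℍ) : uOne4 ((k : ℝ) +ᵥ τ) = uOne4 τ := by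
  have h := qParam_intCast_vadd one_ne_zero k τ
  rw [mul_one] at h
  rw [uOne4_eq_inv_mul_uReg, uOne4_eq_inv_mul_uReg, h]

lemma lowerUnip_two_smul_eq (τ : ℍ) :
    lowerUnip 2 • τ = frickeInvol ((-(1 / 2) : ℝ) +ᵥ frickeInvol τ) := by
  rw [lowerUnip_smul_eq]
  norm_num

lemma gOne4_lowerUnip_two_smul (τ : ℍ) :
    gOne4 (lowerUnip 2 • τ) = 256 * 𝕢 1 τ / gReg (𝕢 1 τ) := by
  have := gOne4_ne_zero τ
  have := uOne4_ne_zero τ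
  have hg : gOne4 (lowerUnip 2 • τ) = 256 / gOne4 τ := by
    rw [lowerUnip_two_smul_eq, gOne4_frickeInvol, gOne4_neg_half_vadd, uOne4_neg_half_vadd,
      gOne4_frickeInvol, uOne4_frickeInvol]
    field_simp
  rw [hg, gOne4_eq_inv_mul_gReg]
  field_simp

lemma uOne4_lowerUnip_two_smul (τ : ℍ) :
    uOne4 (lowerUnip 2 • τ) = -16 * uReg (𝕢 1 τ) / gReg (𝕢 1 τ) := by
  have := gOne4_ne_zero τ
  have := uOne4_ne_zero τ
  have := Function.Periodic.qParam_ne_zero (h := 1) (τ : ℂ)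
  have hu : uOne4 (lowerUnip 2 • τ) = -16 * uOne4 τ / gOne4 τ := by
    rw [lowerUnip_two_smul_eq, uOne4_frickeInvol, uOne4_neg_half_vadd, gOne4_frickeInvol]
    field_simp
    norm_num
  rw [hu, gOne4_eq_inv_mul_gReg, uOne4_eq_inv_mul_uReg]
  field_simp

lemma exists_frickeInvol_eq_S_smul (τ : ℍ) :
    ∃ σ : ℍ, frickeInvol σ = ModularGroup.S • τ ∧ 𝕢 1 σ = 𝕢 4 τ := by
  refine ⟨⟨τ / 4, by simpa using τ.im_pos⟩, ?_, ?_⟩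
  · rw [frickeInvol]
    congr 1
    ext
    rw [coe_hsmul four_pos, coe_mk]
    push_cast
    ring
  · rw [coe_mk, Function.Periodic.qParam, Function.Periodic.qParam]
    push_cast
    ring_nf

lemma gOne4_S_smul (τ : ℍ) :
    gOne4 (ModularGroup.S • τ) = 16 * gReg (𝕢 4 τ) / uReg (𝕢 4 τ) := by
  obtain ⟨σ, hσ, hq⟩ := exists_frickeInvol_eq_S_smul τ
  have := Function.Periodic.qParam_ne_zero (h := 4) (τ : ℂ)
  rw [← hσ, gOne4_frickeInvol, gOne4_eq_inv_mul_gReg, uOne4_eq_inv_mul_uReg, hq]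
  field_simp

lemma uOne4_S_smul (τ : ℍ) : uOne4 (ModularGroup.S • τ) = 256 * 𝕢 4 τ / uReg (𝕢 4 τ) := by
  obtain ⟨σ, hσ, hq⟩ := exists_frickeInvol_eq_S_smul τ
  rw [← hσ, uOne4_frickeInvol, uOne4_eq_inv_mul_uReg, hq]
  field_simp

end Translations

/-! ### The group `Γ₀(4)` -/

section GammaZeroFour

open ModularGroup

lemma mem_Gamma0_iff_dvd {N : ℕ} {γ : SL(2, ℤ)} : γ ∈ Gamma0 N ↔ (N : ℤ) ∣ γ 1 0 := by
  rw [Gamma0_mem, ZMod.intCast_zmod_eq_zero_iff_dvd]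

lemma mul_T_zpow_one (γ : SL(2, ℤ)) (k : ℤ) :
    (γ * T ^ k) 1 = ![γ 1 0, γ 1 0 * k + γ 1 1] := by
  ext i
  fin_cases i <;> simp [coe_T_zpow, Matrix.mul_apply]

lemma mul_lowerUnip_one (γ : SL(2, ℤ)) (n : ℤ) :
    (γ * lowerUnip n) 1 = ![γ 1 0 + γ 1 1 * n, γ 1 1] := by
  ext i
  rw [Matrix.SpecialLinearGroup.coe_mul]
  fin_cases i <;> simp [lowerUnip, Matrix.mul_apply]

lemma lowerUnip_neg (n : ℤ) : lowerUnip (-n) = (lowerUnip n)⁻¹ := by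
  ext i j
  rw [Matrix.SpecialLinearGroup.SL2_inv_expl]
  fin_cases i <;> fin_cases j <;> simp [lowerUnip]

lemma exists_eq_T_zpow_or_neg {γ : SL(2, ℤ)} (hc : γ 1 0 = 0) :
    ∃ k : ℤ, γ = T ^ k ∨ γ = -T ^ k := by
  have hdet := γ.det_coe
  rw [Matrix.det_fin_two, hc, mul_zero, sub_zero, Int.mul_eq_one_iff_eq_one_or_neg_one] at hdet
  obtain ⟨ha, hd⟩ | ⟨ha, hd⟩ := hdet
  · refine ⟨γ 0 1, .inl ?_⟩
    ext i j
    fin_cases i <;> fin_cases j <;> simp [coe_T_zpow, ha, hc, hd]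
  · refine ⟨-γ 0 1, .inr ?_⟩
    ext i j
    fin_cases i <;> fin_cases j <;> simp [coe_T_zpow, ha, hc, hd]

lemma exists_Gamma0_four_descent {γ : SL(2, ℤ)} (hγ : γ ∈ Gamma0 4) (hc : γ 1 0 ≠ 0) :
    ∃ g ∈ Subgroup.closure {-1, T, lowerUnip 4}, γ * g ∈ Gamma0 4 ∧
      ((γ * g) 1 0).natAbs + ((γ * g) 1 1).natAbs < (γ 1 0).natAbs + (γ 1 1).natAbs := by
  have hT (k : ℤ) : T ^ k ∈ Subgroup.closure {-1, T, lowerUnip 4} :=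
    zpow_mem (Subgroup.subset_closure (by simp)) k
  have hU : lowerUnip 4 ∈ Subgroup.closure {-1, T, lowerUnip 4} :=
    Subgroup.subset_closure (by simp)
  have hU' : lowerUnip (-4) ∈ Subgroup.closure {-1, T, lowerUnip 4} :=
    lowerUnip_neg 4 ▸ inv_mem hU
  have hdet := γ.det_coe
  rw [Matrix.det_fin_two] at hdet
  obtain ⟨m, hm⟩ := mem_Gamma0_iff_dvd.mp hγ
  push_cast at hm
  have hd : Odd (γ 1 1) := by
    refine (Int.odd_mul (m := γ 0 0).mp ⟨2 * (γ 0 1 * m), ?_⟩).2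
    linear_combination hdet + γ 0 1 * hm
  obtain ⟨e, he⟩ := hd
  have hsmall : (∃ k : ℤ, (γ 1 0 * k + γ 1 1).natAbs < (γ 1 1).natAbs) ∨
      (γ 1 0 + γ 1 1 * 4).natAbs < (γ 1 0).natAbs ∨
      (γ 1 0 + γ 1 1 * -4).natAbs < (γ 1 0).natAbs := by
    by_cases h1 : (γ 1 0 * 1 + γ 1 1).natAbs < (γ 1 1).natAbs
    · exact .inl ⟨1, h1⟩
    by_cases h2 : (γ 1 0 * -1 + γ 1 1).natAbs < (γ 1 1).natAbs
    · exact .inl ⟨-1, h2⟩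
    · right; omega
  simp only [mem_Gamma0_iff_dvd] at hγ ⊢
  obtain ⟨k, hk⟩ | hk | hk := hsmall
  · exact ⟨_, hT k, by simp [mul_T_zpow_one, hm], by simpa [mul_T_zpow_one] using hk⟩
  · exact ⟨_, hU, by simp [mul_lowerUnip_one, hm],
      by simpa [mul_lowerUnip_one] using hk⟩
  · exact ⟨_, hU', by simp [mul_lowerUnip_one, hm], by simpa [mul_lowerUnip_one] using hk⟩

lemma Gamma0_four_le_closure : Gamma0 4 ≤ Subgroup.closure {-1, T, lowerUnip 4} := by
  intro γ hγ
  have hneg : -1 ∈ Subgroup.closure {-1, T, lowerUnip 4} := Subgroup.subset_closure (by simp)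
  have hT : T ∈ Subgroup.closure {-1, T, lowerUnip 4} := Subgroup.subset_closure (by simp)
  induction hn : (γ 1 0).natAbs + (γ 1 1).natAbs using Nat.strong_induction_on generalizing γ with
  | _ n ih =>
    by_cases hc : γ 1 0 = 0
    · obtain ⟨k, rfl | rfl⟩ := exists_eq_T_zpow_or_neg hc
      · exact zpow_mem hT k
      · exact neg_one_mul (T ^ k) ▸ mul_mem hneg (zpow_mem hT k)
    · obtain ⟨g, hg, hγg, hlt⟩ := exists_Gamma0_four_descent hγ hc
      exact (Subgroup.mul_mem_cancel_right _ hg).mp (ih _ (hn ▸ hlt) hγg rfl)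

lemma smul_eq_of_mem_Gamma0_four {α : Type*} {f : ℍ → α} (hT : ∀ τ, f (T • τ) = f τ)
    (hU : ∀ τ, f (lowerUnip 4 • τ) = f τ) {γ : SL(2, ℤ)} (hγ : γ ∈ Gamma0 4) (τ : ℍ) :
    f (γ • τ) = f τ := by
  have hmem := Gamma0_four_le_closure hγ
  clear hγ
  induction hmem using Subgroup.closure_induction generalizing τ with
  | mem g hg =>
    obtain rfl | rfl | rfl := hg
    · rw [SL_neg_smul, one_smul]
    · exact hT τ
    · exact hU τ
  | one => rw [one_smul]
  | mul g g' _ _ hg hg' => rw [mul_smul, hg, hg']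
  | inv g _ hg => rw [← hg, smul_inv_smul]

lemma mem_Gamma1_four_or_neg_mem {γ : SL(2, ℤ)} (hγ : γ ∈ Gamma0 4) :
    γ ∈ Gamma1 4 ∨ -γ ∈ Gamma1 4 := by
  have hunit : ∀ a d : ZMod 4, a * d = 1 → a = 1 ∧ d = 1 ∨ -a = 1 ∧ -d = 1 := by decide
  have hc : ((γ 1 0 : ℤ) : ZMod 4) = 0 := Gamma0_mem.mp hγ
  have hdet : ((γ 0 0 : ℤ) : ZMod 4) * (γ 1 1 : ℤ) = 1 := by
    have h := congrArg (Int.cast : ℤ → ZMod 4) γ.det_coe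
    rw [Matrix.det_fin_two] at h
    simpa [hc] using h
  simpa [Gamma1_mem, hc] using hunit _ _ hdet

lemma smul_eq_of_mem_Gamma0_four_of_Gamma1 {α : Type*} {f : ℍ → α}
    (hf : ∀ γ ∈ Gamma1 4, ∀ τ, f (γ • τ) = f τ) {γ : SL(2, ℤ)} (hγ : γ ∈ Gamma0 4) (τ : ℍ) :
    f (γ • τ) = f τ := by
  obtain h | h := mem_Gamma1_four_or_neg_mem hγ
  · exact hf γ h τ
  · rw [← hf _ h τ, SL_neg_smul]

lemma exists_mem_Gamma0_four_mul (γ : SL(2, ℤ)) :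
    ∃ δ ∈ Gamma0 4, γ = δ ∨ γ = δ * lowerUnip 2 ∨ ∃ k : ℤ, γ = δ * S * T ^ k := by
  have hdet := γ.det_coe
  rw [Matrix.det_fin_two] at hdet
  obtain ⟨m, hm⟩ | ⟨m, hm⟩ := Int.even_or_odd (γ 1 0)
  · have hd : Odd (γ 1 1) := by
      refine (Int.odd_mul (m := γ 0 0).mp ⟨γ 0 1 * m, ?_⟩).2
      linear_combination hdet + γ 0 1 * hm
    obtain ⟨e, he⟩ := hd
    obtain ⟨l, hl⟩ | ⟨l, hl⟩ := Int.even_or_odd m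
    · exact ⟨γ, mem_Gamma0_iff_dvd.mpr ⟨l, by push_cast; omega⟩, .inl rfl⟩
    · refine ⟨γ * lowerUnip (-2), mem_Gamma0_iff_dvd.mpr ?_, .inr <| .inl ?_⟩
      · rw [mul_lowerUnip_one]
        simp only [Matrix.cons_val_zero, Nat.cast_ofNat]
        omega
      · rw [lowerUnip_neg, inv_mul_cancel_right]
  · refine ⟨γ * T ^ (-(γ 1 1 * γ 1 0)) * S⁻¹, mem_Gamma0_iff_dvd.mpr ?_,
      .inr <| .inr ⟨γ 1 1 * γ 1 0, by group⟩⟩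
    have hentry (k : ℤ) : (γ * T ^ k * S⁻¹) 1 0 = -(γ 1 0 * k + γ 1 1) := by
      rw [Matrix.SpecialLinearGroup.coe_mul, Matrix.mul_apply,
        Matrix.SpecialLinearGroup.SL2_inv_expl]
      simp [mul_T_zpow_one, S]
    rw [hentry, hm]
    exact ⟨γ 1 1 * (m ^ 2 + m), by push_cast; ring⟩

end GammaZeroFour

/-! ### Expansions at infinity -/

section Expansions

open Filter Topology

/-- `f` is meromorphic at `i∞` in the local parameter `q = e^{2πiτ/h}`: up to a power of `q`, it is
a holomorphic function of `q` on the whole unit disc. -/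
def IsMeroAtImInfty (h : ℝ) (f : ℍ → ℂ) : Prop :=
  ∃ n : ℤ, ∃ F : ℂ → ℂ, DifferentiableOn ℂ F (Metric.ball 0 1) ∧
    ∀ τ : ℍ, f τ = 𝕢 h τ ^ n * F (𝕢 h τ)

/-- The variant of `IsMeroAtImInfty 1` with rational Fourier coefficients. -/
def IsRatMeroAtImInfty (f : ℍ → ℂ) : Prop :=
  ∃ n : ℤ, ∃ F ∈ rationalDiscAlg, ∀ τ : ℍ, f τ = 𝕢 1 τ ^ n * F (𝕢 1 τ)

variable {h : ℝ} {f g : ℍ → ℂ} {F : ℂ → ℂ}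

lemma exists_qParam_eq (hh : 0 < h) {q : ℂ} (hq : ‖q‖ < 1) (hq0 : q ≠ 0) : ∃ τ : ℍ, 𝕢 h τ = q :=
  ⟨⟨_, Function.Periodic.im_invQParam_pos_of_norm_lt_one hh hq hq0⟩,
    Function.Periodic.qParam_right_inv hh.ne' hq0⟩

lemma qpow_eq_qParam_zpow (N : ℕ) (n : ℤ) (τ : ℍ) : qpow N n τ = 𝕢 N τ ^ n := by
  rw [qpow, Function.Periodic.qParam, ← Complex.exp_int_mul]
  congr 1
  push_cast
  ring

lemma hasSum_qpow_iff {N : ℕ} (hN : 0 < N) {n₀ : ℤ} {c : ℕ → ℂ} :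
    (∀ τ : ℍ, HasSum (fun n : ℕ ↦ c n * qpow N (n₀ + n) τ) (f τ)) ↔
      ∃ F, HasDiscSeries F (.mk c) ∧ ∀ τ : ℍ, f τ = 𝕢 N τ ^ n₀ * F (𝕢 N τ) := by
  have hN' : (0 : ℝ) < N := by exact_mod_cast hN
  have hshift (n : ℕ) (τ : ℍ) : c n * qpow N (n₀ + n) τ = 𝕢 N τ ^ n₀ * (c n * 𝕢 N τ ^ n) := by
    rw [qpow_eq_qParam_zpow, zpow_add₀ (Function.Periodic.qParam_ne_zero _), zpow_natCast]
    ring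
  have hcancel (τ : ℍ) : 𝕢 N τ ^ n₀ ≠ 0 := zpow_ne_zero _ (Function.Periodic.qParam_ne_zero _)
  simp_rw [hshift]
  constructor
  · intro hsum
    have hsummable {q : ℂ} (hq : ‖q‖ < 1) : Summable fun n ↦ c n * q ^ n := by
      obtain rfl | hq0 := eq_or_ne q 0
      · exact (hasSum_single 0 fun n hn ↦ by simp [hn]).summable
      · obtain ⟨τ, rfl⟩ := exists_qParam_eq hN' hq hq0
        exact (summable_mul_left_iff (hcancel τ)).mp (hsum τ).summable
    refine ⟨fun q ↦ ∑' n, c n * q ^ n, fun q hq ↦ by simpa using (hsummable hq).hasSum, fun τ ↦ ?_⟩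
    rw [← tsum_mul_left, (hsum τ).tsum_eq]
  · rintro ⟨F, hF, hf⟩ τ
    rw [hf]
    exact (by simpa using hF (norm_qParam_coe_lt_one hN' τ) : HasSum _ _).mul_left _

lemma isMeroAtImInfty_iff {N : ℕ} (hN : 0 < N) :
    IsMeroAtImInfty N f ↔ ∃ n₀ : ℤ, ∃ c : ℕ → ℂ,
      ∀ τ : ℍ, HasSum (fun n : ℕ ↦ c n * qpow N (n₀ + n) τ) (f τ) := by
  simp_rw [hasSum_qpow_iff hN]
  constructor
  · rintro ⟨n, F, hF, hf⟩
    exact ⟨n, _, F, hasDiscSeries_of_differentiableOn hF, hf⟩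
  · rintro ⟨n, c, F, hF, hf⟩
    exact ⟨n, F, hF.differentiableOn, hf⟩

lemma isRatMeroAtImInfty_iff :
    IsRatMeroAtImInfty f ↔ ∃ n₀ : ℤ, ∃ c : ℕ → ℚ,
      ∀ τ : ℍ, HasSum (fun n : ℕ ↦ (c n : ℂ) * qpow 1 (n₀ + n) τ) (f τ) := by
  have hmap (c : ℕ → ℚ) :
      (PowerSeries.mk fun n ↦ (c n : ℂ)) = (PowerSeries.mk c).map (algebraMap ℚ ℂ) := by
    ext n
    simp
  simp_rw [hasSum_qpow_iff (f := f) one_pos, hmap, Nat.cast_one]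
  constructor
  · rintro ⟨n, F, ⟨p, hp⟩, hf⟩
    exact ⟨n, fun n ↦ p.coeff n, F, by convert hp; ext; simp, hf⟩
  · rintro ⟨n, c, F, hF, hf⟩
    exact ⟨n, F, ⟨_, hF⟩, hf⟩

lemma IsRatMeroAtImInfty.isMeroAtImInfty (hf : IsRatMeroAtImInfty f) : IsMeroAtImInfty 1 f :=
  let ⟨n, F, hF, hf⟩ := hf
  ⟨n, F, differentiableOn_of_mem_rationalDiscAlg hF, hf⟩

namespace IsMeroAtImInfty

lemma mdifferentiable (hf : IsMeroAtImInfty h f) (hh : 0 < h) : MDifferentiable 𝓘(ℂ) 𝓘(ℂ) f := by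
  obtain ⟨n, F, hF, hf⟩ := hf
  have hq : Differentiable ℂ (𝕢 h) := Function.Periodic.differentiable_qParam
  refine UpperHalfPlane.mdifferentiable_iff.mpr (DifferentiableOn.congr
    (f := fun z ↦ 𝕢 h z ^ n * F (𝕢 h z)) (fun z hz ↦ ?_) fun z hz ↦ ?_)
  · have hFz := hF.differentiableAt (Metric.isOpen_ball.mem_nhds
      (mem_ball_zero_iff.mpr (norm_qParam_coe_lt_one hh ⟨z, hz⟩)))
    exact (((hq z).zpow (.inl (Function.Periodic.qParam_ne_zero z))).mul
      (hFz.comp z (hq z))).differentiableWithinAt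
  · rw [Function.comp_apply, hf, ofComplex_apply_of_im_pos hz]

lemma natCast_mul (hf : IsMeroAtImInfty h f) {N : ℕ} (hN : N ≠ 0) :
    IsMeroAtImInfty (N * h) f := by
  obtain ⟨n, F, hF, hf⟩ := hf
  refine ⟨N * n, fun q ↦ F (q ^ N), hF.comp (by fun_prop) fun q hq ↦ ?_, fun τ ↦ ?_⟩
  · exact mem_ball_zero_iff.mpr (norm_pow_lt_one (mem_ball_zero_iff.mp hq) hN)
  · simp only [hf, _root_.zpow_mul, zpow_natCast, qParam_natCast_mul_pow h hN]

lemma vadd (hf : IsMeroAtImInfty h f) (t : ℝ) : IsMeroAtImInfty h fun τ ↦ f (t +ᵥ τ) := by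
  obtain ⟨n, F, hF, hf⟩ := hf
  set ζ : ℂ := cexp (2 * π * Complex.I * t / h)
  have hζ : ‖ζ‖ = 1 := by
    convert Complex.norm_exp_ofReal_mul_I (2 * π * t / h) using 3
    push_cast
    ring
  refine ⟨n, fun q ↦ ζ ^ n * F (ζ * q), (hF.comp (by fun_prop) fun q hq ↦ ?_).const_mul _,
    fun τ ↦ ?_⟩
  · simpa [hζ] using hq
  · simp only [hf, qParam_vadd, mul_zpow]
    ring

end IsMeroAtImInfty

lemma tendsto_comp_qParam (hh : 0 < h) (hF : DifferentiableOn ℂ F (Metric.ball 0 1)) :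
    Tendsto (fun τ : ℍ ↦ F (𝕢 h τ)) atImInfty (𝓝 (F 0)) :=
  (hF.differentiableAt (Metric.ball_mem_nhds 0 one_pos)).continuousAt.tendsto.comp
    (qParam_tendsto_atImInfty hh)

lemma isBoundedAtImInfty_of_tendsto {c : ℂ} (hf : Tendsto f atImInfty (𝓝 c)) :
    IsBoundedAtImInfty f :=
  hf.isBigO_one ℝ

lemma IsMeroAtImInfty.exists_isBoundedAtImInfty_mul_pow (hf : IsMeroAtImInfty h f) (hh : 0 < h)
    (hg : g =O[atImInfty] fun τ ↦ 𝕢 h τ) :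
    ∃ M₀ : ℕ, ∀ M ≥ M₀, IsBoundedAtImInfty fun τ ↦ f τ * g τ ^ M := by
  obtain ⟨n, F, hF, hf⟩ := hf
  refine ⟨(-n).toNat, fun M hM ↦ ?_⟩
  obtain ⟨j, hj⟩ := Int.eq_ofNat_of_zero_le (show 0 ≤ n + M by omega)
  have hsplit (τ : ℍ) : f τ * 𝕢 h τ ^ M = 𝕢 h τ ^ j * F (𝕢 h τ) := by
    rw [hf, ← zpow_natCast _ j, ← hj, zpow_add₀ (Function.Periodic.qParam_ne_zero _), zpow_natCast]
    ring
  refine ((Asymptotics.isBigO_refl f _).mul (hg.pow M)).trans ?_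
  simp_rw [hsplit]
  exact isBoundedAtImInfty_of_tendsto
    (((qParam_tendsto_atImInfty hh).pow j).mul (tendsto_comp_qParam hh hF))

end Expansions

/-! ### Modular functions for `Γ₀(4)` -/

section ModularFunctions

open Filter Topology ModularGroup

variable {f : ℍ → ℂ}

open scoped ModularForm in
lemma exists_eq_const_of_isBoundedAtImInfty {Γ : Subgroup SL(2, ℤ)} [Γ.FiniteIndex]
    (hd : MDifferentiable 𝓘(ℂ) 𝓘(ℂ) f) (hf : ∀ γ ∈ Γ, ∀ τ, f (γ • τ) = f τ)
    (hb : ∀ γ : SL(2, ℤ), IsBoundedAtImInfty fun τ ↦ f (γ • τ)) : ∃ c, ∀ τ, f τ = c := by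
  have hslash (γ : SL(2, ℤ)) : (f ∣[(0 : ℤ)] γ) = fun τ ↦ f (γ • τ) := by
    ext τ
    simp [ModularForm.SL_slash_apply]
  let F : ModularForm (Γ.map (Matrix.SpecialLinearGroup.mapGL ℝ)) 0 :=
    { toFun := f
      slash_action_eq' := by
        rintro _ ⟨γ, hγ, rfl⟩
        exact (hslash γ).trans (funext (hf γ hγ))
      holo' := hd
      bdd_at_cusps' := fun {c} hc ↦ by
        rw [Subgroup.IsArithmetic.isCusp_iff_isCusp_SL2Z] at hc
        rw [OnePoint.isBoundedAt_iff_forall_SL2Z hc]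
        exact fun γ _ ↦ (hslash γ).symm ▸ hb γ }
  exact (ModularForm.eq_const_of_weight_zero F).imp fun c hc τ ↦ congrFun hc τ

lemma isBoundedAtImInfty_vadd (hf : IsBoundedAtImInfty f) (t : ℝ) :
    IsBoundedAtImInfty fun τ ↦ f (t +ᵥ τ) := by
  have htendsto : Tendsto (fun τ : ℍ ↦ t +ᵥ τ) atImInfty atImInfty := by
    simp [atImInfty, tendsto_comap_iff, Function.comp_def, tendsto_comap]
  exact hf.comp_tendsto htendsto

lemma exists_eq_const_of_Gamma0_four (hd : MDifferentiable 𝓘(ℂ) 𝓘(ℂ) f)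
    (hf : ∀ γ ∈ Gamma0 4, ∀ τ, f (γ • τ) = f τ) (hI : IsBoundedAtImInfty f)
    (hV : IsBoundedAtImInfty fun τ ↦ f (lowerUnip 2 • τ))
    (hS : IsBoundedAtImInfty fun τ ↦ f (S • τ)) : ∃ c, ∀ τ, f τ = c := by
  refine exists_eq_const_of_isBoundedAtImInfty hd hf fun γ ↦ ?_
  obtain ⟨δ, hδ, rfl | rfl | ⟨k, rfl⟩⟩ := exists_mem_Gamma0_four_mul γ
  · simpa only [hf _ hδ] using hI
  · simpa only [mul_smul, hf _ hδ] using hV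
  · simpa only [mul_smul, hf _ hδ, modular_T_zpow_smul] using isBoundedAtImInfty_vadd hS k

lemma isWeaklyHolo1_four_of_cusps (hf : ∀ γ ∈ Gamma0 4, ∀ τ, f (γ • τ) = f τ)
    (hI : IsRatMeroAtImInfty f) (hV : IsMeroAtImInfty 1 fun τ ↦ f (lowerUnip 2 • τ))
    (hS : IsMeroAtImInfty 4 fun τ ↦ f (S • τ)) : IsWeaklyHolo1 4 f := by
  have hwidth {g : ℍ → ℂ} (hg : IsMeroAtImInfty 1 g) : IsMeroAtImInfty 4 g := by
    simpa using hg.natCast_mul four_ne_zero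
  have hcusps (γ : SL(2, ℤ)) : IsMeroAtImInfty 4 fun τ ↦ f (γ • τ) := by
    obtain ⟨δ, hδ, rfl | rfl | ⟨k, rfl⟩⟩ := exists_mem_Gamma0_four_mul γ
    · simpa only [hf _ hδ] using hwidth hI.isMeroAtImInfty
    · simpa only [mul_smul, hf _ hδ] using hwidth hV
    · simpa only [mul_smul, hf _ hδ, modular_T_zpow_smul] using hS.vadd k
  refine ⟨hI.isMeroAtImInfty.mdifferentiable one_pos, fun γ hγ ↦ hf γ (Gamma1_in_Gamma0 4 hγ),
    isRatMeroAtImInfty_iff.mp hI, fun γ ↦ ?_⟩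
  exact (isMeroAtImInfty_iff four_pos).mp (by simpa using hcusps γ)

end ModularFunctions

section Generators

open Filter Topology ModularGroup

lemma lowerUnip_four_smul_eq (τ : ℍ) :
    lowerUnip 4 • τ = frickeInvol (((-1 : ℤ) : ℝ) +ᵥ frickeInvol τ) := by
  rw [lowerUnip_smul_eq]
  norm_num

lemma gOne4_Gamma0_four_smul {γ : SL(2, ℤ)} (hγ : γ ∈ Gamma0 4) (τ : ℍ) :
    gOne4 (γ • τ) = gOne4 τ := by
  refine smul_eq_of_mem_Gamma0_four (fun τ ↦ ?_) (fun τ ↦ ?_) hγ τ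
  · rw [modular_T_smul]
    exact_mod_cast gOne4_intCast_vadd 1 τ
  · rw [lowerUnip_four_smul_eq, gOne4_frickeInvol, gOne4_intCast_vadd, uOne4_intCast_vadd,
      ← gOne4_frickeInvol, frickeInvol_frickeInvol]

lemma uOne4_Gamma0_four_smul {γ : SL(2, ℤ)} (hγ : γ ∈ Gamma0 4) (τ : ℍ) :
    uOne4 (γ • τ) = uOne4 τ := by
  refine smul_eq_of_mem_Gamma0_four (fun τ ↦ ?_) (fun τ ↦ ?_) hγ τ
  · rw [modular_T_smul]
    exact_mod_cast uOne4_intCast_vadd 1 τ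
  · rw [lowerUnip_four_smul_eq, uOne4_frickeInvol, uOne4_intCast_vadd,
      ← uOne4_frickeInvol, frickeInvol_frickeInvol]

lemma differentiableOn_gReg : DifferentiableOn ℂ gReg (Metric.ball 0 1) :=
  differentiableOn_of_mem_rationalDiscAlg gReg_mem_rationalDiscAlg

lemma differentiableOn_uReg : DifferentiableOn ℂ uReg (Metric.ball 0 1) :=
  differentiableOn_of_mem_rationalDiscAlg uReg_mem_rationalDiscAlg

lemma gRegInv_mem_rationalDiscAlg : gReg⁻¹ ∈ rationalDiscAlg :=
  inv_mem_rationalDiscAlg gReg_mem_rationalDiscAlg fun _ ↦ gReg_ne_zero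

lemma uRegInv_mem_rationalDiscAlg : uReg⁻¹ ∈ rationalDiscAlg :=
  inv_mem_rationalDiscAlg uReg_mem_rationalDiscAlg fun _ ↦ uReg_ne_zero

lemma isRatMeroAtImInfty_gOne4 : IsRatMeroAtImInfty gOne4 :=
  ⟨-1, gReg, gReg_mem_rationalDiscAlg,
    fun τ ↦ by rw [gOne4_eq_inv_mul_gReg, _root_.zpow_neg_one]⟩

lemma isRatMeroAtImInfty_uOne4 : IsRatMeroAtImInfty uOne4 :=
  ⟨-1, uReg, uReg_mem_rationalDiscAlg,
    fun τ ↦ by rw [uOne4_eq_inv_mul_uReg, _root_.zpow_neg_one]⟩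

lemma tendsto_gReg_qParam {h : ℝ} (hh : 0 < h) :
    Tendsto (fun τ : ℍ ↦ gReg (𝕢 h τ)) atImInfty (𝓝 1) := by
  simpa only [gReg_zero] using tendsto_comp_qParam hh differentiableOn_gReg

lemma tendsto_uReg_qParam {h : ℝ} (hh : 0 < h) :
    Tendsto (fun τ : ℍ ↦ uReg (𝕢 h τ)) atImInfty (𝓝 1) := by
  simpa only [uReg_zero] using tendsto_comp_qParam hh differentiableOn_uReg

lemma tendsto_gOne4_lowerUnip_two_smul :
    Tendsto (fun τ ↦ gOne4 (lowerUnip 2 • τ)) atImInfty (𝓝 0) := by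
  simp_rw [gOne4_lowerUnip_two_smul]
  simpa [Pi.div_def] using ((qParam_tendsto_atImInfty one_pos).const_mul 256).div
    (tendsto_gReg_qParam one_pos) one_ne_zero

lemma tendsto_uOne4_lowerUnip_two_smul :
    Tendsto (fun τ ↦ uOne4 (lowerUnip 2 • τ)) atImInfty (𝓝 (-16)) := by
  simp_rw [uOne4_lowerUnip_two_smul]
  simpa [Pi.div_def] using ((tendsto_uReg_qParam one_pos).const_mul (-16)).div
    (tendsto_gReg_qParam one_pos) one_ne_zero

lemma tendsto_gOne4_S_smul : Tendsto (fun τ ↦ gOne4 (S • τ)) atImInfty (𝓝 16) := by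
  simp_rw [gOne4_S_smul]
  simpa [Pi.div_def] using ((tendsto_gReg_qParam four_pos).const_mul 16).div
    (tendsto_uReg_qParam four_pos) one_ne_zero

lemma tendsto_uOne4_S_smul : Tendsto (fun τ ↦ uOne4 (S • τ)) atImInfty (𝓝 0) := by
  simp_rw [uOne4_S_smul]
  simpa [Pi.div_def] using ((qParam_tendsto_atImInfty four_pos).const_mul 256).div
    (tendsto_uReg_qParam four_pos) one_ne_zero

lemma isBoundedAtImInfty_gOne4_sub_uOne4 : IsBoundedAtImInfty fun τ ↦ gOne4 τ - uOne4 τ := by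
  obtain ⟨a, ha, G, hG, hsplit⟩ := exists_eq_add_mul_of_mem_rationalDiscAlg
    (sub_mem gReg_mem_rationalDiscAlg uReg_mem_rationalDiscAlg)
  have hdiff (τ : ℍ) : gOne4 τ - uOne4 τ = G (𝕢 1 τ) := by
    have hq := Function.Periodic.qParam_ne_zero (h := 1) (τ : ℂ)
    have hτ := hsplit (𝕢 1 τ)
    rw [Pi.sub_apply, ← ha, Pi.sub_apply, gReg_zero, uReg_zero, sub_self, zero_add] at hτ
    rw [gOne4_eq_inv_mul_gReg, uOne4_eq_inv_mul_uReg, ← mul_sub, hτ, inv_mul_cancel_left₀ hq]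
  simp_rw [hdiff]
  exact isBoundedAtImInfty_of_tendsto
    (tendsto_comp_qParam one_pos (differentiableOn_of_mem_rationalDiscAlg hG))

lemma uOne4_eq_gOne4_sub (τ : ℍ) : uOne4 τ = gOne4 τ - 16 := by
  have hS : Tendsto (fun τ ↦ gOne4 (S • τ) - uOne4 (S • τ)) atImInfty (𝓝 16) := by
    simpa only [sub_zero] using tendsto_gOne4_S_smul.sub tendsto_uOne4_S_smul
  obtain ⟨c, hc⟩ := exists_eq_const_of_Gamma0_four (f := fun τ ↦ gOne4 τ - uOne4 τ)
    ((isRatMeroAtImInfty_gOne4.isMeroAtImInfty.mdifferentiable one_pos).sub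
      (isRatMeroAtImInfty_uOne4.isMeroAtImInfty.mdifferentiable one_pos))
    (fun γ hγ τ ↦ by rw [gOne4_Gamma0_four_smul hγ, uOne4_Gamma0_four_smul hγ])
    isBoundedAtImInfty_gOne4_sub_uOne4
    (isBoundedAtImInfty_of_tendsto
      (tendsto_gOne4_lowerUnip_two_smul.sub tendsto_uOne4_lowerUnip_two_smul))
    (isBoundedAtImInfty_of_tendsto hS)
  simp_rw [hc] at hS
  have hc16 : c = 16 := tendsto_nhds_unique tendsto_const_nhds hS
  linear_combination -(hc τ) - hc16

lemma isWeaklyHolo1_gOne4 : IsWeaklyHolo1 4 gOne4 := by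
  refine isWeaklyHolo1_four_of_cusps (fun γ ↦ gOne4_Gamma0_four_smul) isRatMeroAtImInfty_gOne4
    ⟨1, fun q ↦ 256 / gReg q, ?_, fun τ ↦ ?_⟩ ⟨0, fun q ↦ 16 * gReg q / uReg q, ?_, fun τ ↦ ?_⟩
  · exact (differentiableOn_const 256).div differentiableOn_gReg
      fun q hq ↦ gReg_ne_zero (mem_ball_zero_iff.mp hq)
  · simp only [gOne4_lowerUnip_two_smul, zpow_one]
    ring
  · exact (differentiableOn_gReg.const_mul 16).div differentiableOn_uReg
      fun q hq ↦ uReg_ne_zero (mem_ball_zero_iff.mp hq)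
  · simp only [gOne4_S_smul, zpow_zero, one_mul]

lemma isWeaklyHolo1_gOne4_inv : IsWeaklyHolo1 4 fun τ ↦ (gOne4 τ)⁻¹ := by
  refine isWeaklyHolo1_four_of_cusps (fun γ hγ τ ↦ by rw [gOne4_Gamma0_four_smul hγ])
    ⟨1, gReg⁻¹, gRegInv_mem_rationalDiscAlg, fun τ ↦ ?_⟩
    ⟨-1, fun q ↦ gReg q / 256, differentiableOn_gReg.div_const 256, fun τ ↦ ?_⟩
    ⟨0, fun q ↦ uReg q / (16 * gReg q), ?_, fun τ ↦ ?_⟩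
  · simp only [gOne4_eq_inv_mul_gReg, mul_inv, inv_inv, zpow_one, Pi.inv_apply]
  · simp only [gOne4_lowerUnip_two_smul, inv_div, _root_.zpow_neg_one]
    ring
  · exact differentiableOn_uReg.div (differentiableOn_gReg.const_mul 16) fun q hq ↦
      mul_ne_zero (by norm_num) (gReg_ne_zero (mem_ball_zero_iff.mp hq))
  · simp only [gOne4_S_smul, inv_div, zpow_zero, one_mul]

lemma isWeaklyHolo1_uOne4_inv : IsWeaklyHolo1 4 fun τ ↦ (uOne4 τ)⁻¹ := by
  refine isWeaklyHolo1_four_of_cusps (fun γ hγ τ ↦ by rw [uOne4_Gamma0_four_smul hγ])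
    ⟨1, uReg⁻¹, uRegInv_mem_rationalDiscAlg, fun τ ↦ ?_⟩
    ⟨0, fun q ↦ gReg q / (-16 * uReg q), ?_, fun τ ↦ ?_⟩
    ⟨-1, fun q ↦ uReg q / 256, differentiableOn_uReg.div_const 256, fun τ ↦ ?_⟩
  · simp only [uOne4_eq_inv_mul_uReg, mul_inv, inv_inv, zpow_one, Pi.inv_apply]
  · exact differentiableOn_gReg.div (differentiableOn_uReg.const_mul (-16)) fun q hq ↦
      mul_ne_zero (by norm_num) (uReg_ne_zero (mem_ball_zero_iff.mp hq))
  · simp only [uOne4_lowerUnip_two_smul, inv_div, zpow_zero, one_mul]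
  · simp only [uOne4_S_smul, inv_div, _root_.zpow_neg_one]
    ring

end Generators

/-! ### Generation by `gOne4` and `uOne4` -/

namespace IsRatMeroAtImInfty

variable {f g : ℍ → ℂ}

lemma mul (hf : IsRatMeroAtImInfty f) (hg : IsRatMeroAtImInfty g) :
    IsRatMeroAtImInfty fun τ ↦ f τ * g τ := by
  obtain ⟨m, F, hF, hf⟩ := hf
  obtain ⟨n, G, hG, hg⟩ := hg
  refine ⟨m + n, F * G, mul_mem hF hG, fun τ ↦ ?_⟩
  simp only [hf, hg, zpow_add₀ (Function.Periodic.qParam_ne_zero _), Pi.mul_apply]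
  ring

lemma pow (hf : IsRatMeroAtImInfty f) (M : ℕ) : IsRatMeroAtImInfty fun τ ↦ f τ ^ M := by
  obtain ⟨n, F, hF, hf⟩ := hf
  refine ⟨n * M, F ^ M, pow_mem hF M, fun τ ↦ ?_⟩
  simp only [hf, mul_pow, _root_.zpow_mul, zpow_natCast, Pi.pow_apply]

lemma exists_eq_inv_pow_mul (hf : IsRatMeroAtImInfty f) :
    ∃ m : ℕ, ∃ F ∈ rationalDiscAlg, ∀ τ : ℍ, f τ = (𝕢 1 τ ^ m)⁻¹ * F (𝕢 1 τ) := by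
  obtain ⟨n, F, hF, hf⟩ := hf
  refine ⟨n.natAbs, fun q ↦ q ^ (n + n.natAbs).toNat * F q,
    mul_mem (pow_mem id_mem_rationalDiscAlg _) hF, fun τ ↦ ?_⟩
  have hq := Function.Periodic.qParam_ne_zero (h := 1) (τ : ℂ)
  have hn : n = -(n.natAbs : ℤ) + (n + n.natAbs).toNat := by omega
  rw [hf, ← mul_assoc]
  nth_rw 1 [hn]
  rw [zpow_add₀ hq, _root_.zpow_neg, zpow_natCast, zpow_natCast]

end IsRatMeroAtImInfty

section Generation

open Filter Topology ModularGroup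

lemma exists_polynomial_sub_eq_mul (m : ℕ) {F : ℂ → ℂ} (hF : F ∈ rationalDiscAlg) :
    ∃ p : Polynomial ℚ, ∃ G ∈ rationalDiscAlg, ∀ q ≠ 0,
      (q ^ m)⁻¹ * F q - Polynomial.aeval (q⁻¹ * gReg q) p = q * G q := by
  induction m generalizing F with
  | zero =>
    obtain ⟨a, -, G, hG, hFG⟩ := exists_eq_add_mul_of_mem_rationalDiscAlg hF
    exact ⟨.C a, G, hG, fun q _ ↦ by simp [hFG]⟩
  | succ m ih =>
    obtain ⟨a, ha, -⟩ := exists_eq_add_mul_of_mem_rationalDiscAlg hF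
    obtain ⟨b, hb, F₁, hF₁, hsplit⟩ := exists_eq_add_mul_of_mem_rationalDiscAlg
      (sub_mem hF (Subalgebra.smul_mem _ (pow_mem gReg_mem_rationalDiscAlg (m + 1)) a))
    obtain ⟨p, G, hG, hp⟩ := ih hF₁
    refine ⟨p + .C a * .X ^ (m + 1), G, hG, fun q hq ↦ ?_⟩
    have hFq : F q = a * gReg q ^ (m + 1) + q * F₁ q := by
      have hq := hsplit q
      simp only [← hb, Pi.sub_apply, Pi.smul_apply, Pi.pow_apply, gReg_zero, ha, one_pow,
        Rat.smul_def, mul_one, sub_self, zero_add] at hq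
      linear_combination hq
    rw [← hp q hq, hFq]
    simp only [map_add, map_mul, map_pow, Polynomial.aeval_C, Polynomial.aeval_X,
      eq_ratCast, mul_pow, inv_pow]
    field_simp
    ring

lemma exists_eq_aeval_gOne4 {f : ℍ → ℂ} (hf : ∀ γ ∈ Gamma0 4, ∀ τ, f (γ • τ) = f τ)
    (hI : IsRatMeroAtImInfty f) (hV : IsBoundedAtImInfty fun τ ↦ f (lowerUnip 2 • τ))
    (hS : IsBoundedAtImInfty fun τ ↦ f (S • τ)) :
    ∃ p : Polynomial ℚ, ∀ τ, f τ = Polynomial.aeval (gOne4 τ) p := by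
  obtain ⟨m, F, hF, hfF⟩ := hI.exists_eq_inv_pow_mul
  obtain ⟨p, G, hG, hp⟩ := exists_polynomial_sub_eq_mul m hF
  have hcusp (τ : ℍ) : f τ - Polynomial.aeval (gOne4 τ) p = 𝕢 1 τ ^ (1 : ℤ) * G (𝕢 1 τ) := by
    rw [hfF, gOne4_eq_inv_mul_gReg, hp _ (Function.Periodic.qParam_ne_zero _), zpow_one]
  have hGd := differentiableOn_of_mem_rationalDiscAlg hG
  have hI' : Tendsto (fun τ ↦ f τ - Polynomial.aeval (gOne4 τ) p) atImInfty (𝓝 0) := by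
    simpa [hcusp] using (qParam_tendsto_atImInfty one_pos).mul (tendsto_comp_qParam one_pos hGd)
  have hbdd {g : ℍ → ℂ} {c : ℂ} (hg : Tendsto g atImInfty (𝓝 c)) :
      IsBoundedAtImInfty fun τ ↦ Polynomial.aeval (g τ) p :=
    isBoundedAtImInfty_of_tendsto ((p.continuous_aeval.tendsto c).comp hg)
  obtain ⟨c, hc⟩ := exists_eq_const_of_Gamma0_four
    (f := fun τ ↦ f τ - Polynomial.aeval (gOne4 τ) p)
    (IsMeroAtImInfty.mdifferentiable ⟨1, G, hGd, hcusp⟩ one_pos)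
    (fun γ hγ τ ↦ by rw [hf γ hγ, gOne4_Gamma0_four_smul hγ])
    (isBoundedAtImInfty_of_tendsto hI')
    (hV.sub (hbdd tendsto_gOne4_lowerUnip_two_smul)) (hS.sub (hbdd tendsto_gOne4_S_smul))
  simp_rw [hc] at hI'
  have hc0 : c = 0 := tendsto_nhds_unique tendsto_const_nhds hI'
  exact ⟨p, fun τ ↦ sub_eq_zero.mp ((hc τ).trans hc0)⟩

lemma isBigO_const_mul_div_of_tendsto {α : Type*} {l : Filter α} {f g : α → ℂ} (c : ℂ) {a : ℂ}
    (hg : Tendsto g l (𝓝 a)) (ha : a ≠ 0) : (fun x ↦ c * f x / g x) =O[l] f := by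
  have hbdd : (fun x ↦ c / g x) =O[l] fun _ ↦ (1 : ℂ) :=
    (tendsto_const_nhds.div hg ha).isBigO_one ℂ
  simpa [mul_div_assoc, mul_div_left_comm] using (Asymptotics.isBigO_refl f l).mul hbdd

lemma isBigO_gOne4_mul_uOne4_lowerUnip_two_smul :
    (fun τ ↦ gOne4 (lowerUnip 2 • τ) * uOne4 (lowerUnip 2 • τ)) =O[atImInfty]
      fun τ ↦ 𝕢 4 τ := by
  have hwidth : (fun τ : ℍ ↦ 𝕢 1 τ) =O[atImInfty] fun τ ↦ 𝕢 4 τ := by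
    refine Asymptotics.isBigO_of_le _ fun τ ↦ ?_
    have hpow : 𝕢 4 τ ^ 4 = 𝕢 1 τ := by simpa using qParam_natCast_mul_pow 1 four_ne_zero (τ : ℂ)
    rw [← hpow, norm_pow]
    exact pow_le_of_le_one (norm_nonneg _) (norm_qParam_coe_lt_one four_pos τ).le four_ne_zero
  have hg : (fun τ ↦ gOne4 (lowerUnip 2 • τ)) =O[atImInfty] fun τ ↦ 𝕢 1 τ := by
    simp_rw [gOne4_lowerUnip_two_smul]
    exact isBigO_const_mul_div_of_tendsto 256 (tendsto_gReg_qParam one_pos) one_ne_zero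
  simpa using (hg.trans hwidth).mul (tendsto_uOne4_lowerUnip_two_smul.isBigO_one ℂ)

lemma isBigO_gOne4_mul_uOne4_S_smul :
    (fun τ ↦ gOne4 (S • τ) * uOne4 (S • τ)) =O[atImInfty] fun τ ↦ 𝕢 4 τ := by
  have hu : (fun τ ↦ uOne4 (S • τ)) =O[atImInfty] fun τ ↦ 𝕢 4 τ := by
    simp_rw [uOne4_S_smul]
    exact isBigO_const_mul_div_of_tendsto 256 (tendsto_uReg_qParam four_pos) one_ne_zero
  simpa using (tendsto_gOne4_S_smul.isBigO_one ℂ).mul hu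

lemma exists_mvPolynomial_of_isWeaklyHolo1_four {h : ℍ → ℂ} (hh : IsWeaklyHolo1 4 h) :
    ∃ P : MvPolynomial (Fin 3) ℚ, ∀ τ,
      h τ = MvPolynomial.aeval ![gOne4 τ, (gOne4 τ)⁻¹, (uOne4 τ)⁻¹] P := by
  obtain ⟨-, hΓ₁, hI, hcusps⟩ := hh
  have hmero (γ : SL(2, ℤ)) : IsMeroAtImInfty 4 fun τ ↦ h (γ • τ) := by
    exact_mod_cast (isMeroAtImInfty_iff four_pos).mpr (hcusps γ)
  obtain ⟨M₁, hV⟩ := (hmero (lowerUnip 2)).exists_isBoundedAtImInfty_mul_pow four_pos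
    isBigO_gOne4_mul_uOne4_lowerUnip_two_smul
  obtain ⟨M₂, hS⟩ := (hmero S).exists_isBoundedAtImInfty_mul_pow four_pos
    isBigO_gOne4_mul_uOne4_S_smul
  set M := max M₁ M₂
  obtain ⟨p, hp⟩ := exists_eq_aeval_gOne4 (f := fun τ ↦ h τ * (gOne4 τ * uOne4 τ) ^ M)
    (fun γ hγ τ ↦ by
      rw [smul_eq_of_mem_Gamma0_four_of_Gamma1 hΓ₁ hγ, gOne4_Gamma0_four_smul hγ,
        uOne4_Gamma0_four_smul hγ])
    ((isRatMeroAtImInfty_iff.mpr hI).mul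
      ((isRatMeroAtImInfty_gOne4.mul isRatMeroAtImInfty_uOne4).pow M))
    (hV M (le_max_left _ _)) (hS M (le_max_right _ _))
  refine ⟨Polynomial.aeval (.X 0) p * .X 1 ^ M * .X 2 ^ M, fun τ ↦ ?_⟩
  have := gOne4_ne_zero τ
  have := uOne4_ne_zero τ
  rw [map_mul, map_mul, map_pow, map_pow, ← Polynomial.aeval_algHom_apply]
  simp only [MvPolynomial.aeval_X, Matrix.cons_val, ← hp]
  rw [mul_pow, inv_pow, inv_pow]
  field_simp

end Generation

/-- `O_{1,4}(ℚ) = ℚ[g_{1,4}, g_{1,4}⁻¹, (g_{1,4} - 16)⁻¹]`. -/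
theorem statement14 :
    IsWeaklyHolo1 4 gOne4 ∧
    IsWeaklyHolo1 4 (fun τ => (gOne4 τ)⁻¹) ∧
    IsWeaklyHolo1 4 (fun τ => (gOne4 τ - 16)⁻¹) ∧
    (∀ h : ℍ → ℂ, IsWeaklyHolo1 4 h →
      ∃ P : MvPolynomial (Fin 3) ℚ, ∀ τ : ℍ,
        h τ = MvPolynomial.aeval ![gOne4 τ, (gOne4 τ)⁻¹, (gOne4 τ - 16)⁻¹] P) := by
  simp only [← uOne4_eq_gOne4_sub]
  exact ⟨isWeaklyHolo1_gOne4, isWeaklyHolo1_gOne4_inv, isWeaklyHolo1_uOne4_inv,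
    fun h hh ↦ exists_mvPolynomial_of_isWeaklyHolo1_four hh⟩
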